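/- Let γ > 0 and t > 0 be such that the covariance matrix Σ(t) is invertible. Then for all p, q₀, p₀ ∈ ℝ, the Gaussian fundamental solution satisfies the method-of-images identity F(t, 1, p; q₀, p₀) = F(t, 1, −p; 2 − q₀, −p₀). -/

import Mathlib

open Matrix in
/-- Covariance matrix `Σ(t)` of the Gaussian fundamental solution of the kinetic
Fokker–Planck equation of 1D Langevin dynamics with constant potential and `β = 1`. -/
noncomputable def covMat (γ t : ℝ) : Matrix (Fin 2) (Fin 2) ℝ :=
  !![(2 / γ ^ 2) * (γ * t - 3 / 2 + 2 * Real.exp (-γ * t) - Real.exp (-2 * γ * t) / 2),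
     (1 - Real.exp (-γ * t)) ^ 2 / γ;
     (1 - Real.exp (-γ * t)) ^ 2 / γ,
     1 - Real.exp (-2 * γ * t)]

/-- Mean vector `M(t,q₀,p₀)` of the Gaussian fundamental solution. -/
noncomputable def meanVec (γ t q₀ p₀ : ℝ) : Fin 2 → ℝ :=
  ![q₀ + p₀ * (1 - Real.exp (-γ * t)) / γ, p₀ * Real.exp (-γ * t)]

open Matrix in
/-- The Gaussian fundamental solution
`F(t,q,p;q₀,p₀) = (2π √(det Σ(t)))⁻¹ exp(−½ (z−M)ᵀ Σ(t)⁻¹ (z−M))` with `z = (q,p)`. -/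
noncomputable def Fsol (γ t q p q₀ p₀ : ℝ) : ℝ :=
  (2 * Real.pi * Real.sqrt (covMat γ t).det)⁻¹ *
    Real.exp (-(1 / 2) *
      ((![q, p] - meanVec γ t q₀ p₀) ⬝ᵥ ((covMat γ t)⁻¹ *ᵥ (![q, p] - meanVec γ t q₀ p₀))))

theorem meanVec_neg (γ t q₀ p₀ : ℝ) : meanVec γ t (-q₀) (-p₀) = -meanVec γ t q₀ p₀ := by
  ext i
  fin_cases i <;> simp only [meanVec, Fin.zero_eta, Fin.mk_one, Matrix.cons_val_zero,
    Matrix.cons_val_one, Pi.neg_apply] <;> ring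

theorem meanVec_add_position (γ t a q₀ p₀ : ℝ) :
    meanVec γ t (q₀ + a) p₀ = meanVec γ t q₀ p₀ + ![a, 0] := by
  ext i
  fin_cases i <;> simp only [meanVec, Fin.zero_eta, Fin.mk_one, Matrix.cons_val_zero,
    Matrix.cons_val_one, Pi.add_apply] <;> ring

theorem Fsol_neg (γ t q p q₀ p₀ : ℝ) :
    Fsol γ t (-q) (-p) (-q₀) (-p₀) = Fsol γ t q p q₀ p₀ := by
  have deviation_neg :
      ![-q, -p] - meanVec γ t (-q₀) (-p₀) = -(![q, p] - meanVec γ t q₀ p₀) := by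
    rw [meanVec_neg, neg_sub', Matrix.neg_cons, Matrix.neg_cons, Matrix.neg_empty]
  rw [Fsol, deviation_neg, Matrix.mulVec_neg, neg_dotProduct_neg, Fsol]

theorem Fsol_add_position (γ t a q p q₀ p₀ : ℝ) :
    Fsol γ t (q + a) p (q₀ + a) p₀ = Fsol γ t q p q₀ p₀ := by
  have deviation_add_position :
      ![q + a, p] - meanVec γ t (q₀ + a) p₀ = ![q, p] - meanVec γ t q₀ p₀ := by
    have shift : ![q + a, p] = ![q, p] + ![a, 0] := by
      simp only [Matrix.cons_add_cons, add_zero, Matrix.empty_add_empty]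
    rw [meanVec_add_position, shift, add_sub_add_right_eq_sub]
  rw [Fsol, deviation_add_position, Fsol]

theorem stmt5_general (γ t : ℝ) (_hdet : IsUnit (covMat γ t).det) (c q p q₀ p₀ : ℝ) :
    Fsol γ t q p q₀ p₀ = Fsol γ t (2 * c - q) (-p) (2 * c - q₀) (-p₀) :=
  calc
    Fsol γ t q p q₀ p₀ = Fsol γ t (-q) (-p) (-q₀) (-p₀) := (Fsol_neg ..).symm
    _ = Fsol γ t (-q + 2 * c) (-p) (-q₀ + 2 * c) (-p₀) := (Fsol_add_position ..).symm
    _ = Fsol γ t (2 * c - q) (-p) (2 * c - q₀) (-p₀) := by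
      rw [neg_add_eq_sub, neg_add_eq_sub]

/-- Method-of-images identity `F(t, 1, p; q₀, p₀) = F(t, 1, −p; 2 − q₀, −p₀)` for the
Gaussian fundamental solution, when the covariance matrix `Σ(t)` is invertible. -/
theorem stmt5 (γ t : ℝ) (hγ : 0 < γ) (ht : 0 < t) (hdet : IsUnit (covMat γ t).det)
    (p q₀ p₀ : ℝ) :
    Fsol γ t 1 p q₀ p₀ = Fsol γ t 1 (-p) (2 - q₀) (-p₀) := by
  convert stmt5_general γ t hdet 1 1 p q₀ p₀ using 2 <;> norm_num
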